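/- Let x_{n−1} ≺ … ≺ x_1 ≺ y_{n−1} ≺ … ≺ y_1 ≺ z_{n−1} ≺ … ≺ z_1 ≺ t_{n−1} ≺ … ≺ t_1 ≺ α_{n−1} ≺ … ≺ α_1 be pairwise distinct points of P ordered anticlockwise on the circle (a pentagon configuration with vertices x, y, z, t, α and enough further points of P to choose right-side n-tuples). For 1 ≤ i, j ≤ n−1, set A_i = E(x^i, z^{n−i−1} | t_1, y_1) · E(x^{i−1}, z^{n−i} | y_1, t_1) and B_j = E(x^j, t^{n−j−1} | α_1, z_1) · E(x^{j−1}, t^{n−j} | z_1, α_1) in Q_n(P) (the images of the (i,n−i)-edge function of the edge xz and of the (j,n−j)-edge function of the edge xt). Then [A_i, B_j] = 1 if i = j = n−1, and [A_i, B_j] = 0 otherwise. -/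

import Mathlib

noncomputable section

open scoped Classical
open MvPolynomial

set_option maxHeartbeats 1000000
set_option synthInstance.maxHeartbeats 400000

instance fact01 : Fact ((0:ℝ) < 1) := ⟨one_pos⟩

/-- The circle, modelled as `ℝ/ℤ`. -/
abbrev Circle1 : Type := AddCircle (1:ℝ)

/-- The coordinate in `[0,1)` of the point `x` of the circle obtained after removing the
point `o` and identifying the complement of `o` with an interval. -/
def coordAt (o x : Circle1) : ℝ := ((AddCircle.equivIco 1 0) (x - o) : ℝ)

/-- The sign `△` of a real number, as a rational number in `{-1, 0, 1}`. -/
def sgnQ (a : ℝ) : ℚ := if a < 0 then -1 else if a = 0 then 0 else 1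

/-- The linking number `J(rx, sy)` of the chords `rx` and `sy`, computed using the
cut point `o`. -/
def linkingAt (o r x s y : Circle1) : ℚ :=
  (1/2) * (sgnQ (coordAt o r - coordAt o x) * sgnQ (coordAt o r - coordAt o y)
        * sgnQ (coordAt o y - coordAt o x)
      - sgnQ (coordAt o r - coordAt o x) * sgnQ (coordAt o r - coordAt o s)
        * sgnQ (coordAt o s - coordAt o x))

lemma circle1_infinite : Infinite Circle1 := by
  have h : (Set.Ico (0:ℝ) (0+1)).Infinite := Set.Ico_infinite (by norm_num)
  haveI := h.to_subtype
  exact Infinite.of_injective (fun q : Set.Ico (0:ℝ) (0+1) => (AddCircle.equivIco 1 0).symm q)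
    ((AddCircle.equivIco 1 0).symm.injective)

lemma exists_cut (r x s y : Circle1) :
    ∃ o : Circle1, o ≠ r ∧ o ≠ x ∧ o ≠ s ∧ o ≠ y := by
  haveI : Infinite Circle1 := circle1_infinite
  have hfin : ({r, x, s, y} : Set Circle1).Finite :=
    (((Set.finite_singleton y).insert s).insert x).insert r
  obtain ⟨o, ho⟩ := hfin.infinite_compl.nonempty
  simp only [Set.mem_compl_iff, Set.mem_insert_iff, Set.mem_singleton_iff, not_or] at ho
  exact ⟨o, ho.1, ho.2.1, ho.2.2.1, ho.2.2.2⟩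

/-- The linking number `J(rx, sy)` of the chords `rx` and `sy` (computed with respect to
some cut point distinct from the four points; by the independence of the choice this is
the linking number). -/
def linkQ (r x s y : Circle1) : ℚ := linkingAt (exists_cut r x s y).choose r x s y

/-- The set of points of the circle `l`, listed in anticlockwise (cyclic) order:
there is a cut point `o` avoiding them such that the induced coordinates are
strictly increasing along the list. -/
def AnticlockwiseList (l : List Circle1) : Prop :=
  ∃ o : Circle1, (∀ p ∈ l, p ≠ o) ∧ (l.map (coordAt o)).Chain' (· < ·)

/-- Index type for the generators `xy` of the swapping ring of `P`
(one generator for each ordered pair of distinct points; the generators `xx`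
are identified with `0`). -/
abbrev SwapIdx (P : Set Circle1) : Type := {q : (↥P) × (↥P) // q.1 ≠ q.2}

/-- The swapping ring `Z(P)`: the polynomial ring over `K` on the generators `xy`,
`x ≠ y ∈ P` (this realizes the commutative ring generated by all ordered pairs `xy`
subject to the relations `xx = 0`). -/
abbrev SwapRing (K : Type) [Field K] (P : Set Circle1) : Type := MvPolynomial (SwapIdx P) K

/-- The generator `xy` of the swapping ring (equal to `0` when `x = y`). -/
def gen (K : Type) [Field K] (P : Set Circle1) (x y : ↥P) : SwapRing K P :=
  if h : x ≠ y then MvPolynomial.X (⟨(x, y), h⟩ : SwapIdx P) else 0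

/-- The value of the `(c1,c2)`-swapping bracket on two generators `rx` and `sy`:
`J(rx,sy) • (c1 • ry·sx + c2 • rx·sy)`. -/
def genBr (K : Type) [Field K] (P : Set Circle1) (c1 c2 : K) (g g' : SwapIdx P) :
    SwapRing K P :=
  ((linkQ g.1.1.1 g.1.2.1 g'.1.1.1 g'.1.2.1 : ℚ) : K) •
    (c1 • (gen K P g.1.1 g'.1.2 * gen K P g'.1.1 g.1.2)
      + c2 • (gen K P g.1.1 g.1.2 * gen K P g'.1.1 g'.1.2))

/-- The `(c1,c2)`-swapping bracket on `Z(P)`: the biderivation extending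
`{rx, sy} = J(rx,sy)·(c1·ry·sx + c2·rx·sy)` by the Leibniz rule in each argument.
The swapping bracket is the case `c1 = 1, c2 = 0`. -/
def swapBr (K : Type) [Field K] (P : Set Circle1) (c1 c2 : K) (a b : SwapRing K P) :
    SwapRing K P :=
  (MvPolynomial.mkDerivation K
    (fun g : SwapIdx P => (MvPolynomial.mkDerivation K (genBr K P c1 c2 g)) b)) a

/-- `Δ((x_1,…,x_m),(y_1,…,y_m)) = det (x_i y_j)` in the swapping ring. -/
def Dmat (K : Type) [Field K] (P : Set Circle1) (m : ℕ) (xs ys : Fin m → ↥P) :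
    SwapRing K P :=
  Matrix.det (Matrix.of fun i j => gen K P (xs i) (ys j))

/-- The ideal `R_n(P)` of `Z(P)` generated by all `(n+1)×(n+1)` determinants
`Δ((x_1,…,x_{n+1}),(y_1,…,y_{n+1}))`. -/
def Rideal (K : Type) [Field K] (P : Set Circle1) (n : ℕ) : Ideal (SwapRing K P) :=
  Ideal.span {D : SwapRing K P | ∃ xs ys : Fin (n+1) → ↥P, D = Dmat K P (n+1) xs ys}

/-- The rank `n` swapping ring `Z_n(P) = Z(P)/R_n(P)`. -/
abbrev ZnRing (K : Type) [Field K] (P : Set Circle1) (n : ℕ) : Type :=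
  SwapRing K P ⧸ Rideal K P n

/-- The quotient map `Z(P) → Z_n(P)`. -/
def toZn (K : Type) [Field K] (P : Set Circle1) (n : ℕ) :
    SwapRing K P →+* ZnRing K P n := Ideal.Quotient.mk (Rideal K P n)

/-- The total fraction ring `Q_n(P)` of the rank `n` swapping ring. -/
abbrev QnRing (K : Type) [Field K] (P : Set Circle1) (n : ℕ) : Type :=
  Localization (nonZeroDivisors (ZnRing K P n))

/-- The canonical map `Z(P) → Q_n(P)`. -/
def toQn (K : Type) [Field K] (P : Set Circle1) (n : ℕ) :
    SwapRing K P →+* QnRing K P n :=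
  (algebraMap (ZnRing K P n) (QnRing K P n)).comp (toZn K P n)

/-- `Bq` is the extension to the total fraction ring `Q_n(P)` of the `(c1,c2)`-swapping
bracket of the rank `n` swapping algebra: it agrees with the swapping bracket on the image
of `Z(P)` and satisfies the Leibniz rule in both arguments (these properties determine it
uniquely). -/
def IsQnBracket (K : Type) [Field K] (P : Set Circle1) (n : ℕ) (c1 c2 : K)
    (Bq : QnRing K P n → QnRing K P n → QnRing K P n) : Prop :=
  (∀ a b : SwapRing K P,
      Bq (toQn K P n a) (toQn K P n b) = toQn K P n (swapBr K P c1 c2 a b)) ∧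
  (∀ a b c : QnRing K P n, Bq (a * b) c = a * Bq b c + b * Bq a c) ∧
  (∀ a b c : QnRing K P n, Bq a (b * c) = b * Bq a c + c * Bq a b)

/-- The `n`-tuple `(x_1, …, x_a, y_1, …, y_b, z_1, …, z_{n-a-b})` built from three
families of points (families are indexed from `0`, i.e. `x 0 = x_1`). -/
def rows3 {α : Type*} {n : ℕ} (x y z : ℕ → α) (a b : ℕ) : Fin n → α :=
  fun i => if (i : ℕ) < a then x (i : ℕ)
    else if (i : ℕ) < a + b then y ((i : ℕ) - a)
    else z ((i : ℕ) - (a + b))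

/-- The `n`-tuple `(x_1, …, x_a, y_1, …, y_b, z_1, …, z_{n-1-a-b}, w)` built from three
families of points and a final point `w`. -/
def rows3s {α : Type*} {n : ℕ} (x y z : ℕ → α) (a b : ℕ) (w : α) : Fin n → α :=
  fun i => if (i : ℕ) < a then x (i : ℕ)
    else if (i : ℕ) < a + b then y ((i : ℕ) - a)
    else if (i : ℕ) < n - 1 then z ((i : ℕ) - (a + b))
    else w

/-- The `n`-tuple `(x_1, …, x_{n-1}, t)`. -/
def snocTup {α : Type*} {n : ℕ} (x : ℕ → α) (t : α) : Fin n → α :=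
  fun i => if (i : ℕ) < n - 1 then x (i : ℕ) else t

/-- The list `f_a, f_{a-1}, …, f_1` (descending enumeration). -/
def descPts (f : ℕ → Circle1) (a : ℕ) : List Circle1 := ((List.range a).map f).reverse

/-- The list `f_1, f_2, …, f_a` (ascending enumeration). -/
def ascPts (f : ℕ → Circle1) (a : ℕ) : List Circle1 := (List.range a).map f

/-- The `(n×n)`-determinant quotient `Δ(numR, v)/Δ(denR, v)` as an element of the total
fraction ring `Q_n(P)`. -/
def EQuot (K : Type) [Field K] (P : Set Circle1) (n : ℕ)
    (numR denR v : Fin n → ↥P)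
    (h : toZn K P n (Dmat K P n denR v) ∈ nonZeroDivisors (ZnRing K P n)) :
    QnRing K P n :=
  Localization.mk (toZn K P n (Dmat K P n numR v)) ⟨toZn K P n (Dmat K P n denR v), h⟩


/-- The image under the homomorphism `θ` of the `(i, n-i)`-edge function of the edge `xz`
of the quadrilateral `x y z t` (with `t1 = t_1` and `y1 = y_1`):
`E(x^i, z^{n-i-1} | t_1, y_1) · E(x^{i-1}, z^{n-i} | y_1, t_1)`,
computed with the right-side `n`-tuple `v`. -/
def edgeQuot (K : Type) [Field K] (P : Set Circle1) (n : ℕ) (x z : ℕ → ↥P)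
    (t1 y1 : ↥P) (i : ℕ) (v : Fin n → ↥P)
    (h1 : toZn K P n (Dmat K P n (rows3s x z x i (n-i-1) y1) v)
          ∈ nonZeroDivisors (ZnRing K P n))
    (h2 : toZn K P n (Dmat K P n (rows3s x z x (i-1) (n-i) t1) v)
          ∈ nonZeroDivisors (ZnRing K P n)) : QnRing K P n :=
  EQuot K P n (rows3s x z x i (n-i-1) t1) (rows3s x z x i (n-i-1) y1) v h1
    * EQuot K P n (rows3s x z x (i-1) (n-i) y1) (rows3s x z x (i-1) (n-i) t1) v h2

/-!
Cut the circle open at a point preceding all the points of the pentagon. The linking number of two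
chords then becomes a sum of four signs, each depending on the order of two endpoints only. For
determinants with common columns `v` this gives
`{Δ(A), Δ(B)} = Δ(B) D Δ(A) - Δ(A) D Δ(B) - ½ ∑ sign(Aᵢ, Bⱼ) Δ(A[i := Bⱼ]) Δ(B[j := Aᵢ])`
for a derivation `D`, whose terms cancel in brackets of quotients of determinants. If, for fixed
`j`, all nonvanishing terms of the sum over `i` have the same sign, the Plücker relation evaluates
that sum as a multiple of `Δ(A) Δ(B)`.

For rows `A = (x^p, z^q, w)` and `B = (x^r, t^s, u)` with `w ∈ {y₁, t₁}` and `u ∈ {z₁, α₁}` this is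
the case for every `j`. The signs of the entries of `B` other than `u` do not depend on `u`, and
the sign of `u` does not depend on `w` unless `q = s = 0`. Hence the mixed second difference that
is the normalized bracket of two determinant quotients vanishes except for
`E(x^{n-1} | t₁, y₁)` and `E(x^{n-1} | α₁, z₁)`, where it is `1`.
-/

lemma coordAt_mem_Ico (o x : Circle1) : coordAt o x ∈ Set.Ico (0 : ℝ) 1 := by
  simpa [coordAt] using ((AddCircle.equivIco (1 : ℝ) 0) (x - o)).2

lemma coe_coordAt (o x : Circle1) : ((coordAt o x : ℝ) : Circle1) = x - o :=
  AddCircle.coe_equivIco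

lemma coordAt_eq_of_coe_eq {o x : Circle1} {a : ℝ} (ha : a ∈ Set.Ico (0 : ℝ) 1)
    (h : (a : Circle1) = x - o) : coordAt o x = a := by
  rw [coordAt, ← h]
  exact AddCircle.equivIco_coe_of_mem (p := (1 : ℝ)) (a := 0) (by simpa using ha)

lemma coordAt_change_cut (o o' x : Circle1) :
    coordAt o' x =
      coordAt o x - coordAt o o' + if coordAt o x < coordAt o o' then 1 else 0 := by
  have hx := coordAt_mem_Ico o x
  have ho' := coordAt_mem_Ico o o'
  apply coordAt_eq_of_coe_eq
  · split_ifs <;> constructor <;> linarith [hx.1, hx.2, ho'.1, ho'.2]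
  · split_ifs <;> simp [coe_coordAt]

lemma sgnQ_sub_of_lt {a b : ℝ} (h : a < b) : sgnQ (a - b) = -1 := if_pos (sub_neg.2 h)

lemma sgnQ_sub_of_gt {a b : ℝ} (h : b < a) : sgnQ (a - b) = 1 := by
  rw [sgnQ, if_neg (sub_pos.2 h).not_gt, if_neg (sub_pos.2 h).ne']

lemma sgnQ_zero : sgnQ 0 = 0 := by simp [sgnQ]

lemma sgnQ_sub_comm (a b : ℝ) : sgnQ (a - b) = -sgnQ (b - a) := by
  rcases lt_trichotomy a b with h | rfl | h <;>
    simp [sgnQ_sub_of_lt, sgnQ_sub_of_gt, sgnQ_zero, *]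

lemma sgnQ_mul_sgnQ_mul_sgnQ (a b c : ℝ) :
    sgnQ (a - b) * sgnQ (a - c) * sgnQ (c - b) =
      sgnQ (a - c) + sgnQ (c - b) - sgnQ (a - b) := by
  unfold sgnQ
  split_ifs <;> first | (norm_num; done) | grind

-- The correction is a coboundary, so it cancels in the linking number.
lemma sgnQ_coordAt_change_cut (o o' a b : Circle1) :
    sgnQ (coordAt o' a - coordAt o' b) = sgnQ (coordAt o a - coordAt o b) +
      ((if coordAt o a < coordAt o o' then 2 else 0) -
        (if coordAt o b < coordAt o o' then 2 else 0)) := by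
  have ha := coordAt_mem_Ico o a
  have hb := coordAt_mem_Ico o b
  rw [coordAt_change_cut o o' a, coordAt_change_cut o o' b]
  unfold sgnQ
  split_ifs <;> first | (norm_num; done) | grind

lemma linkingAt_eq (o r x s y : Circle1) :
    linkingAt o r x s y = (1 / 2) *
      (sgnQ (coordAt o r - coordAt o y) - sgnQ (coordAt o x - coordAt o y)
        - sgnQ (coordAt o r - coordAt o s) + sgnQ (coordAt o x - coordAt o s)) := by
  rw [linkingAt, sgnQ_mul_sgnQ_mul_sgnQ, sgnQ_mul_sgnQ_mul_sgnQ,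
    sgnQ_sub_comm (coordAt o y) (coordAt o x), sgnQ_sub_comm (coordAt o s) (coordAt o x)]
  ring

lemma linkQ_eq_linkingAt (o r x s y : Circle1) : linkQ r x s y = linkingAt o r x s y := by
  rw [linkQ, linkingAt_eq, linkingAt_eq]
  simp only [sgnQ_coordAt_change_cut o (exists_cut r x s y).choose]
  ring

/-- The sign of the position of `a` relative to `b` on the circle cut open at `o`: `-1` if `a`
comes before `b` anticlockwise, `1` if it comes after, `0` if the points agree. -/
def cutSign (K : Type) [Field K] (o a b : Circle1) : K :=
  (sgnQ (coordAt o a - coordAt o b) : ℚ)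

section CutSign

variable {K : Type} [Field K]

lemma cutSign_self (o a : Circle1) : cutSign K o a a = 0 := by
  simp [cutSign, sgnQ_zero]

lemma cutSign_of_lt {o a b : Circle1} (h : coordAt o a < coordAt o b) :
    cutSign K o a b = -1 := by
  simp [cutSign, sgnQ_sub_of_lt h]

lemma cutSign_of_gt {o a b : Circle1} (h : coordAt o b < coordAt o a) :
    cutSign K o a b = 1 := by
  simp [cutSign, sgnQ_sub_of_gt h]

lemma cutSign_comm (o a b : Circle1) : cutSign K o a b = -cutSign K o b a := by
  rw [cutSign, sgnQ_sub_comm, cutSign, Rat.cast_neg]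

lemma cast_linkQ [CharZero K] (o r x s y : Circle1) :
    ((linkQ r x s y : ℚ) : K) =
      (1 / 2) * (cutSign K o r y - cutSign K o x y - cutSign K o r s + cutSign K o x s) := by
  rw [linkQ_eq_linkingAt o, linkingAt_eq]
  push_cast [cutSign]
  rfl

end CutSign

section Determinants

variable {R ι : Type*} [CommRing R]

lemma derivation_prod {k : Type*} [CommRing k] [Algebra k R] [DecidableEq ι]
    (D : Derivation k R R) (s : Finset ι) (f : ι → R) :
    D (∏ i ∈ s, f i) = ∑ i ∈ s, D (f i) * ∏ l ∈ s.erase i, f l := by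
  induction s using Finset.induction_on with
  | empty => simp
  | insert a s ha ih =>
    rw [Finset.prod_insert ha, D.leibniz, ih, Finset.sum_insert ha, Finset.erase_insert ha,
      add_comm, smul_eq_mul, smul_eq_mul, mul_comm, Finset.mul_sum]
    congr 1
    refine Finset.sum_congr rfl fun i hi => ?_
    have hai : a ≠ i := fun h => ha (h ▸ hi)
    rw [Finset.erase_insert_of_ne hai,
      Finset.prod_insert fun h => ha (Finset.mem_of_mem_erase h), mul_left_comm]

variable [Fintype ι] [DecidableEq ι]

lemma det_updateCol_eq_sum (M : Matrix ι ι R) (j : ι) (b : ι → R) :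
    (M.updateCol j b).det = ∑ i, M.adjugate j i * b i := by
  rw [← Matrix.cramer_apply, Matrix.cramer_eq_adjugate_mulVec]
  rfl

lemma det_updateRow_eq_sum (M : Matrix ι ι R) (i : ι) (b : ι → R) :
    (M.updateRow i b).det = ∑ j, b j * M.adjugate j i := by
  rw [← Matrix.cramer_transpose_apply, Matrix.cramer_eq_adjugate_mulVec,
    ← Matrix.adjugate_transpose]
  exact Finset.sum_congr rfl fun j _ => mul_comm _ _

lemma sum_adjugate_mul (M : Matrix ι ι R) (k l : ι) :
    ∑ i, M.adjugate k i * M i l = if k = l then M.det else 0 := by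
  rw [← Matrix.mul_apply, Matrix.adjugate_mul, Matrix.smul_apply, Matrix.one_apply]
  simp

lemma derivation_det {k : Type*} [CommRing k] [Algebra k R] (D : Derivation k R R)
    (M : Matrix ι ι R) : D M.det = ∑ i, ∑ j, M.adjugate j i * D (M i j) := by
  rw [Finset.sum_comm]
  have hcol (j : ι) : (M.updateCol j fun i => D (M i j)).det =
      ∑ σ : Equiv.Perm ι, Equiv.Perm.sign σ •
        (D (M (σ j) j) * ∏ l ∈ Finset.univ.erase j, M (σ l) l) := by
    rw [Matrix.det_apply]
    refine Finset.sum_congr rfl fun σ _ => ?_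
    rw [← Finset.mul_prod_erase _ _ (Finset.mem_univ j), Matrix.updateCol_self]
    congr 2
    exact Finset.prod_congr rfl fun l hl => Matrix.updateCol_ne (Finset.ne_of_mem_erase hl)
  simp_rw [← det_updateCol_eq_sum, hcol]
  rw [Finset.sum_comm, Matrix.det_apply, map_sum]
  refine Finset.sum_congr rfl fun σ _ => ?_
  rw [← Finset.smul_sum, ← derivation_prod]
  exact map_zsmul D ((Equiv.Perm.sign σ : ℤˣ) : ℤ) _

end Determinants

section SwappingRing

variable {K : Type} [Field K] {P : Set Circle1}

lemma gen_self (a : P) : gen K P a a = 0 := dif_neg (not_not.2 rfl)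

lemma gen_of_ne {a b : P} (h : a ≠ b) : gen K P a b = X ⟨(a, b), h⟩ := dif_pos h

variable (K) in
/-- The matrix `(x_i y_j)` of generators, whose determinant is `Δ(x, y)`. -/
def genMatrix {n : ℕ} (A v : Fin n → P) : Matrix (Fin n) (Fin n) (SwapRing K P) :=
  Matrix.of fun i j => gen K P (A i) (v j)

/-- The derivation of `Z(P)` with `xy ↦ ½ sign(x, y) xy`. It collects the part of the bracket of
two determinants that cancels in the bracket of determinant quotients. -/
def signDerivation (K : Type) [Field K] (P : Set Circle1) (o : Circle1) :
    Derivation K (SwapRing K P) (SwapRing K P) :=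
  MvPolynomial.mkDerivation K fun g =>
    C (1 / 2 * cutSign K o g.1.1 g.1.2) * gen K P g.1.1 g.1.2

lemma signDerivation_gen (o : Circle1) (a b : P) :
    signDerivation K P o (gen K P a b) = C (1 / 2 * cutSign K o a b) * gen K P a b := by
  by_cases h : a = b
  · simp [h, gen_self]
  · rw [gen_of_ne h, signDerivation, MvPolynomial.mkDerivation_X, gen_of_ne h]

lemma swapBr_gen_gen [CharZero K] (o : Circle1) (r x s y : P) :
    swapBr K P 1 0 (gen K P r x) (gen K P s y) =
      C (1 / 2 * (cutSign K o r y - cutSign K o x y - cutSign K o r s + cutSign K o x s)) *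
        (gen K P r y * gen K P s x) := by
  by_cases hrx : r = x
  · simp [hrx, gen_self, swapBr]
  by_cases hsy : s = y
  · simp [hsy, gen_self, swapBr, gen_of_ne hrx]
  · simp [swapBr, genBr, gen_of_ne hrx, gen_of_ne hsy, MvPolynomial.smul_eq_C_mul, cast_linkQ o]

lemma swapBr_Dmat_left {n : ℕ} (A v : Fin n → P) (b : SwapRing K P) :
    swapBr K P 1 0 (Dmat K P n A v) b =
      ∑ i, ∑ k, (genMatrix K A v).adjugate k i * swapBr K P 1 0 (gen K P (A i) (v k)) b :=
  derivation_det _ (genMatrix K A v)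

lemma swapBr_gen_Dmat {n : ℕ} (r x : P) (B v : Fin n → P) :
    swapBr K P 1 0 (gen K P r x) (Dmat K P n B v) =
      ∑ j, ∑ l, (genMatrix K B v).adjugate l j *
        swapBr K P 1 0 (gen K P r x) (gen K P (B j) (v l)) := by
  by_cases hrx : r = x
  · simp [hrx, gen_self, swapBr]
  · simp only [swapBr, gen_of_ne hrx, MvPolynomial.mkDerivation_X]
    exact derivation_det _ (genMatrix K B v)

lemma Dmat_update_eq_sum {n : ℕ} (A v : Fin n → P) (i : Fin n) (a : P) :
    Dmat K P n (Function.update A i a) v =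
      ∑ k, gen K P a (v k) * (genMatrix K A v).adjugate k i := by
  rw [← det_updateRow_eq_sum (genMatrix K A v) i fun k => gen K P a (v k)]
  refine congrArg Matrix.det (Matrix.ext fun l k => ?_)
  by_cases h : l = i <;> simp [h, genMatrix, Matrix.updateRow_apply]

lemma Dmat_update_apply_of_ne {n : ℕ} (A v : Fin n → P) {i l : Fin n} (h : l ≠ i) :
    Dmat K P n (Function.update A i (A l)) v = 0 :=
  Matrix.det_zero_of_row_eq h <| by ext; simp [Function.update_of_ne h]

lemma sum_adjugate_mul_Dmat_update {n : ℕ} (A B v : Fin n → P) (j k : Fin n) :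
    ∑ i, (genMatrix K A v).adjugate k i * Dmat K P n (Function.update B j (A i)) v =
      Dmat K P n A v * (genMatrix K B v).adjugate k j := by
  calc ∑ i, (genMatrix K A v).adjugate k i * Dmat K P n (Function.update B j (A i)) v
      = ∑ l, (∑ i, (genMatrix K A v).adjugate k i * genMatrix K A v i l) *
          (genMatrix K B v).adjugate l j := by
        simp only [Dmat_update_eq_sum, Finset.mul_sum, Finset.sum_mul, ← mul_assoc]
        exact Finset.sum_comm
    _ = Dmat K P n A v * (genMatrix K B v).adjugate k j := by
        simp only [sum_adjugate_mul, ite_mul, zero_mul, Finset.sum_ite_eq, Finset.mem_univ,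
          if_true]
        rfl

lemma sum_Dmat_update_mul_Dmat_update {n : ℕ} (A B v : Fin n → P) (j : Fin n) (b : P) :
    ∑ i, Dmat K P n (Function.update A i b) v * Dmat K P n (Function.update B j (A i)) v =
      Dmat K P n A v * Dmat K P n (Function.update B j b) v := by
  calc ∑ i, Dmat K P n (Function.update A i b) v * Dmat K P n (Function.update B j (A i)) v
      = ∑ k, gen K P b (v k) * ∑ i, (genMatrix K A v).adjugate k i *
          Dmat K P n (Function.update B j (A i)) v := by
        simp only [Dmat_update_eq_sum A, Finset.sum_mul, Finset.mul_sum, mul_assoc]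
        exact Finset.sum_comm
    _ = Dmat K P n A v * Dmat K P n (Function.update B j b) v := by
        simp only [sum_adjugate_mul_Dmat_update]
        simp only [Dmat_update_eq_sum, Finset.mul_sum, mul_left_comm]

lemma signDerivation_Dmat {n : ℕ} (o : Circle1) (A v : Fin n → P) :
    signDerivation K P o (Dmat K P n A v) =
      ∑ i, ∑ k, (genMatrix K A v).adjugate k i *
        (C (1 / 2 * cutSign K o (A i) (v k)) * gen K P (A i) (v k)) := by
  simp only [← signDerivation_gen]
  exact derivation_det _ (genMatrix K A v)

lemma sum_sum_adjugate_mul_gen {n : ℕ} (B v : Fin n → P) (c : Fin n → SwapRing K P)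
    (k : Fin n) :
    ∑ j, ∑ l, (genMatrix K B v).adjugate l j * (c l * gen K P (B j) (v k)) =
      Dmat K P n B v * c k := by
  calc ∑ j, ∑ l, (genMatrix K B v).adjugate l j * (c l * gen K P (B j) (v k))
      = ∑ l, c l * ∑ j, (genMatrix K B v).adjugate l j * genMatrix K B v j k := by
        simp only [Finset.mul_sum, mul_left_comm]
        exact Finset.sum_comm
    _ = Dmat K P n B v * c k := by
        simp only [sum_adjugate_mul, mul_ite, mul_zero, Finset.sum_ite_eq', Finset.mem_univ,
          if_true]
        exact mul_comm _ _

-- The signs relative to `v l` only contribute for `l = k`, by `sum_sum_adjugate_mul_gen`.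
lemma swapBr_gen_apply_Dmat [CharZero K] {n : ℕ} (o : Circle1) (r : P) (B v : Fin n → P)
    (k : Fin n) :
    swapBr K P 1 0 (gen K P r (v k)) (Dmat K P n B v) =
      Dmat K P n B v * (C (1 / 2 * cutSign K o r (v k)) * gen K P r (v k)) -
        ∑ j, C (1 / 2 * (cutSign K o r (B j) + cutSign K o (B j) (v k))) *
          (gen K P (B j) (v k) * Dmat K P n (Function.update B j r) v) := by
  have hcollapse := sum_sum_adjugate_mul_gen B v
    (fun l => C (1 / 2 * (cutSign K o r (v l) - cutSign K o (v k) (v l))) * gen K P r (v l)) k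
  rw [cutSign_self, sub_zero] at hcollapse
  simp only [swapBr_gen_Dmat, swapBr_gen_gen o, ← hcollapse, Dmat_update_eq_sum, Finset.mul_sum,
    ← Finset.sum_sub_distrib]
  refine Finset.sum_congr rfl fun j _ => Finset.sum_congr rfl fun l _ => ?_
  rw [cutSign_comm o (v k) (B j)]
  simp only [map_mul, map_add, map_sub, map_neg]
  ring

lemma Dmat_mul_signDerivation_Dmat {n : ℕ} (o : Circle1) (A B v : Fin n → P) :
    Dmat K P n A v * signDerivation K P o (Dmat K P n B v) =
      ∑ i, ∑ k, ∑ j, (genMatrix K A v).adjugate k i * (C (1 / 2 * cutSign K o (B j) (v k)) *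
        (gen K P (B j) (v k) * Dmat K P n (Function.update B j (A i)) v)) := by
  rw [signDerivation_Dmat, Finset.mul_sum, Finset.sum_comm]
  simp only [Finset.mul_sum]
  rw [Finset.sum_comm]
  refine Finset.sum_congr rfl fun k _ => ?_
  rw [Finset.sum_comm]
  refine Finset.sum_congr rfl fun j _ => ?_
  rw [← mul_assoc, ← sum_adjugate_mul_Dmat_update, Finset.sum_mul]
  exact Finset.sum_congr rfl fun i _ => by ring

lemma sum_sum_swap_eq_sum_adjugate {n : ℕ} (o : Circle1) (A B v : Fin n → P) :
    ∑ j, ∑ i, C (1 / 2 * cutSign K o (A i) (B j)) *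
        (Dmat K P n (Function.update A i (B j)) v * Dmat K P n (Function.update B j (A i)) v) =
      ∑ i, ∑ k, ∑ j, (genMatrix K A v).adjugate k i * (C (1 / 2 * cutSign K o (A i) (B j)) *
        (gen K P (B j) (v k) * Dmat K P n (Function.update B j (A i)) v)) := by
  rw [Finset.sum_comm]
  refine Finset.sum_congr rfl fun i _ => ?_
  rw [Finset.sum_comm]
  refine Finset.sum_congr rfl fun j _ => ?_
  rw [Dmat_update_eq_sum A, Finset.sum_mul, Finset.mul_sum]
  exact Finset.sum_congr rfl fun k _ => by ring

theorem swapBr_Dmat_Dmat [CharZero K] {n : ℕ} (o : Circle1) (A B v : Fin n → P) :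
    swapBr K P 1 0 (Dmat K P n A v) (Dmat K P n B v) =
      Dmat K P n B v * signDerivation K P o (Dmat K P n A v) -
        Dmat K P n A v * signDerivation K P o (Dmat K P n B v) -
        ∑ j, ∑ i, C (1 / 2 * cutSign K o (A i) (B j)) *
          (Dmat K P n (Function.update A i (B j)) v *
            Dmat K P n (Function.update B j (A i)) v) := by
  rw [sum_sum_swap_eq_sum_adjugate, Dmat_mul_signDerivation_Dmat o A, signDerivation_Dmat,
    swapBr_Dmat_left]
  simp only [swapBr_gen_apply_Dmat o, Finset.mul_sum, ← Finset.sum_sub_distrib]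
  refine Finset.sum_congr rfl fun i _ => Finset.sum_congr rfl fun k _ => ?_
  rw [mul_sub, Finset.mul_sum, sub_sub, ← Finset.sum_add_distrib, mul_left_comm]
  refine congrArg _ (Finset.sum_congr rfl fun j _ => ?_)
  simp only [map_mul, map_add]
  ring

end SwappingRing

section SwapSign

variable {K : Type} [Field K] {P : Set Circle1} {n : ℕ} {o : Circle1}

/-- All nonzero terms `Δ(A[i := B j]) Δ(B[j := A i])` of the swap of the rows `A` with the row
`B j` carry the same sign `c`. The first two alternatives say that one of the two determinants
has a repeated row. -/
def IsSwapSign (o : Circle1) (A B : Fin n → P) (j : Fin n) (c : K) : Prop :=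
  ∀ i, A i ∈ B '' {j}ᶜ ∨ B j ∈ A '' {i}ᶜ ∨ cutSign K o (A i) (B j) = c

lemma isSwapSign_zero_of_mem_range {A B : Fin n → P} {j : Fin n} (h : B j ∈ Set.range A) :
    IsSwapSign (K := K) o A B j 0 := by
  obtain ⟨l, hl⟩ := h
  intro i
  by_cases hli : l = i
  · rw [← hl, hli, cutSign_self]
    exact .inr (.inr rfl)
  · exact .inr (.inl ⟨l, hli, hl⟩)

lemma isSwapSign_of_forall_mem_range {A B : Fin n → P} {j : Fin n} {c : K}
    (h : ∀ a ∈ Set.range A, (a ∈ Set.range B ∧ a ≠ B j) ∨ cutSign K o a (B j) = c) :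
    IsSwapSign o A B j c := by
  intro i
  rcases h (A i) ⟨i, rfl⟩ with ⟨⟨l, hl⟩, hne⟩ | hc
  · exact .inl ⟨l, fun hlj => hne (hlj ▸ hl.symm), hl⟩
  · exact .inr (.inr hc)

lemma IsSwapSign.sum_eq {A B : Fin n → P} {j : Fin n} {c : K} (h : IsSwapSign o A B j c)
    (v : Fin n → P) :
    ∑ i, C (1 / 2 * cutSign K o (A i) (B j)) *
        (Dmat K P n (Function.update A i (B j)) v * Dmat K P n (Function.update B j (A i)) v) =
      C (1 / 2 * c) * (Dmat K P n A v * Dmat K P n B v) := by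
  have hplucker := sum_Dmat_update_mul_Dmat_update (K := K) A B v j (B j)
  rw [Function.update_eq_self] at hplucker
  rw [← hplucker, Finset.mul_sum]
  refine Finset.sum_congr rfl fun i _ => ?_
  rcases h i with ⟨l, hl, hA⟩ | ⟨l, hl, hB⟩ | hc
  · rw [← hA, Dmat_update_apply_of_ne B v hl, mul_zero, mul_zero, mul_zero]
  · rw [← hB, Dmat_update_apply_of_ne A v hl, zero_mul, mul_zero, mul_zero]
  · rw [hc]

/-- `κ` is the sum of the swap signs of the rows of `B` with respect to `A`: up to the terms coming
from `signDerivation`, the bracket of `Δ(A, v)` and `Δ(B, v)` is `-κ / 2` times their product. -/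
def HasTotalSwapSign (o : Circle1) (A B : Fin n → P) (κ : K) : Prop :=
  ∃ c : Fin n → K, (∀ j, IsSwapSign o A B j (c j)) ∧ ∑ j, c j = κ

theorem HasTotalSwapSign.swapBr_eq [CharZero K] {A B : Fin n → P} {κ : K}
    (h : HasTotalSwapSign o A B κ) (v : Fin n → P) :
    swapBr K P 1 0 (Dmat K P n A v) (Dmat K P n B v) =
      Dmat K P n B v * signDerivation K P o (Dmat K P n A v) -
        Dmat K P n A v * signDerivation K P o (Dmat K P n B v) -
        C (1 / 2 * κ) * (Dmat K P n A v * Dmat K P n B v) := by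
  obtain ⟨c, hc, rfl⟩ := h
  rw [swapBr_Dmat_Dmat o, Finset.sum_congr rfl fun j _ => (hc j).sum_eq v,
    ← Finset.sum_mul, ← map_sum, ← Finset.mul_sum]

lemma exists_hasTotalSwapSign_add {A B₁ B₂ : Fin n → P} {ℓ : Fin n} {c₁ c₂ : K}
    (h : ∀ j ≠ ℓ, ∃ c : K, IsSwapSign o A B₁ j c ∧ IsSwapSign o A B₂ j c)
    (h₁ : IsSwapSign o A B₁ ℓ c₁) (h₂ : IsSwapSign o A B₂ ℓ c₂) :
    ∃ κ, HasTotalSwapSign o A B₁ (c₁ + κ) ∧ HasTotalSwapSign o A B₂ (c₂ + κ) := by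
  choose! c hc₁ hc₂ using fun j hj => h j hj
  have total {B : Fin n → P} {b : K} (hb : IsSwapSign o A B ℓ b)
      (hc : ∀ j ≠ ℓ, IsSwapSign o A B j (c j)) :
      HasTotalSwapSign o A B (b + ∑ j ∈ Finset.univ \ {ℓ}, c j) := by
    refine ⟨Function.update c ℓ b, fun j => ?_, Finset.sum_update_of_mem (Finset.mem_univ ℓ) c b⟩
    rcases eq_or_ne j ℓ with rfl | hj
    · rwa [Function.update_self]
    · rw [Function.update_of_ne hj]
      exact hc j hj
  exact ⟨_, total h₁ hc₁, total h₂ hc₂⟩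

end SwapSign

section DeterminantQuotients

lemma biderivation_quotient {Q : Type*} [CommRing Q] {br : Q → Q → Q}
    (leibniz_left : ∀ a b c, br (a * b) c = a * br b c + b * br a c)
    (leibniz_right : ∀ a b c, br a (b * c) = b * br a c + c * br a b)
    {F₁ F₂ G₁ G₂ E G dF₁ dF₂ dG₁ dG₂ t₁₁ t₁₂ t₂₁ t₂₂ : Q}
    (hE : F₁ = E * F₂) (hG : G₁ = G * G₂) (hF₂ : IsUnit F₂) (hG₂ : IsUnit G₂)
    (h₁₁ : br F₁ G₁ = G₁ * dF₁ - F₁ * dG₁ - t₁₁ * (F₁ * G₁))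
    (h₁₂ : br F₁ G₂ = G₂ * dF₁ - F₁ * dG₂ - t₁₂ * (F₁ * G₂))
    (h₂₁ : br F₂ G₁ = G₁ * dF₂ - F₂ * dG₁ - t₂₁ * (F₂ * G₁))
    (h₂₂ : br F₂ G₂ = G₂ * dF₂ - F₂ * dG₂ - t₂₂ * (F₂ * G₂)) :
    br E G = (t₁₂ + t₂₁ - t₁₁ - t₂₂) * (E * G) := by
  subst hE hG
  rw [leibniz_left, leibniz_right, leibniz_right] at h₁₁
  rw [leibniz_left] at h₁₂
  rw [leibniz_right] at h₂₁
  apply (hF₂.mul hG₂).mul_left_cancel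
  linear_combination h₁₁ - G * h₁₂ - E * h₂₁ + E * G * h₂₂

variable {K : Type} [Field K] {P : Set Circle1} {n : ℕ}

lemma toQn_Dmat_eq_EQuot_mul (num den v : Fin n → P)
    (h : toZn K P n (Dmat K P n den v) ∈ nonZeroDivisors (ZnRing K P n)) :
    toQn K P n (Dmat K P n num v) =
      EQuot K P n num den v h * toQn K P n (Dmat K P n den v) := by
  rw [EQuot, Localization.mk_eq_mk'_apply]
  exact (IsLocalization.mk'_spec (QnRing K P n) (toZn K P n (Dmat K P n num v))
    (⟨toZn K P n (Dmat K P n den v), h⟩ : nonZeroDivisors (ZnRing K P n))).symm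

lemma isUnit_toQn {a : SwapRing K P} (h : toZn K P n a ∈ nonZeroDivisors (ZnRing K P n)) :
    IsUnit (toQn K P n a) :=
  IsLocalization.map_units (QnRing K P n) (⟨toZn K P n a, h⟩ : nonZeroDivisors (ZnRing K P n))

theorem IsQnBracket.EQuot_EQuot [CharZero K] {Bq : QnRing K P n → QnRing K P n → QnRing K P n}
    (hBq : IsQnBracket K P n 1 0 Bq) {o : Circle1} {A₁ A₂ B₁ B₂ : Fin n → P} {ℓ : Fin n}
    {c₁₁ c₁₂ c₂₁ c₂₂ : K}
    (h₁ : ∀ j ≠ ℓ, ∃ c : K, IsSwapSign o A₁ B₁ j c ∧ IsSwapSign o A₁ B₂ j c)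
    (h₂ : ∀ j ≠ ℓ, ∃ c : K, IsSwapSign o A₂ B₁ j c ∧ IsSwapSign o A₂ B₂ j c)
    (h₁₁ : IsSwapSign o A₁ B₁ ℓ c₁₁) (h₁₂ : IsSwapSign o A₁ B₂ ℓ c₁₂)
    (h₂₁ : IsSwapSign o A₂ B₁ ℓ c₂₁) (h₂₂ : IsSwapSign o A₂ B₂ ℓ c₂₂)
    (v : Fin n → P)
    (hA : toZn K P n (Dmat K P n A₂ v) ∈ nonZeroDivisors (ZnRing K P n))
    (hB : toZn K P n (Dmat K P n B₂ v) ∈ nonZeroDivisors (ZnRing K P n)) :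
    Bq (EQuot K P n A₁ A₂ v hA) (EQuot K P n B₁ B₂ v hB) =
      toQn K P n (C (1 / 2 * (c₁₂ + c₂₁ - c₁₁ - c₂₂))) *
        (EQuot K P n A₁ A₂ v hA * EQuot K P n B₁ B₂ v hB) := by
  obtain ⟨extends_swapBr, leibniz_left, leibniz_right⟩ := hBq
  obtain ⟨κ₁, hκ₁₁, hκ₁₂⟩ := exists_hasTotalSwapSign_add h₁ h₁₁ h₁₂
  obtain ⟨κ₂, hκ₂₁, hκ₂₂⟩ := exists_hasTotalSwapSign_add h₂ h₂₁ h₂₂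
  have bracket {A B : Fin n → P} {κ : K} (h : HasTotalSwapSign o A B κ) :=
    (extends_swapBr (Dmat K P n A v) (Dmat K P n B v)).trans
      (congrArg (toQn K P n) (h.swapBr_eq v))
  simp only [map_sub (toQn K P n), map_mul (toQn K P n)] at bracket
  refine (biderivation_quotient leibniz_left leibniz_right (toQn_Dmat_eq_EQuot_mul A₁ A₂ v hA)
    (toQn_Dmat_eq_EQuot_mul B₁ B₂ v hB) (isUnit_toQn hA) (isUnit_toQn hB) (bracket hκ₁₁)
    (bracket hκ₁₂) (bracket hκ₂₁) (bracket hκ₂₂)).trans ?_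
  simp only [← map_add, ← map_sub]
  ring_nf

end DeterminantQuotients

section Rows

variable {β : Type*} {m p q : ℕ} {x z z' : ℕ → β}

lemma rows3s_last (h : p + q = m) (w : β) :
    rows3s (n := m + 1) x z z' p q w (Fin.last m) = w := by
  simp [rows3s, show ¬ m < p by lia, show ¬ m < p + q by lia]

lemma rows3s_of_ne_last (h : p + q = m) {j : Fin (m + 1)} (hj : j ≠ Fin.last m) :
    (∃ k < p, ∀ w, rows3s x z z' p q w j = x k) ∨
      ∃ k < q, ∀ w, rows3s x z z' p q w j = z k := by
  have hjm : (j : ℕ) < p + q := h ▸ Fin.val_lt_last hj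
  by_cases hjp : (j : ℕ) < p
  · exact .inl ⟨j, hjp, fun w => if_pos hjp⟩
  · exact .inr ⟨j - p, by lia, fun w => by rw [rows3s, if_neg hjp, if_pos hjm]⟩

lemma mem_range_rows3s (h : p + q = m) {a w : β} :
    a ∈ Set.range (rows3s (n := m + 1) x z z' p q w) ↔
      (∃ k < p, x k = a) ∨ (∃ k < q, z k = a) ∨ w = a := by
  constructor
  · rintro ⟨j, rfl⟩
    rcases eq_or_ne j (Fin.last m) with rfl | hj
    · exact .inr (.inr (rows3s_last h w).symm)
    · rcases rows3s_of_ne_last (x := x) (z := z) (z' := z') h hj with ⟨k, hk, hjk⟩ | ⟨k, hk, hjk⟩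
      · exact .inl ⟨k, hk, (hjk w).symm⟩
      · exact .inr (.inl ⟨k, hk, (hjk w).symm⟩)
  · rintro (⟨k, hk, rfl⟩ | ⟨k, hk, rfl⟩ | rfl)
    · exact ⟨⟨k, by lia⟩, by simp [rows3s, hk]⟩
    · exact ⟨⟨p + k, by lia⟩, by simp [rows3s, hk]⟩
    · exact ⟨Fin.last m, rows3s_last h _⟩

end Rows

section Pentagon

variable {P : Set Circle1}

/-- On the circle cut open at `o`, the first `m` points of `f` come before those of `g`. -/
def Precedes (o : Circle1) (m : ℕ) (f g : ℕ → P) : Prop :=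
  ∀ k < m, ∀ l < m, coordAt o (f k) < coordAt o (g l)

/-- The order relations of the pentagon configuration that determine the brackets of determinant
quotients, read off on the circle cut open at `o`; here `m = n - 1`. -/
structure IsPentagonCut (o : Circle1) (m : ℕ) (x y z t α : ℕ → P) : Prop where
  xy : Precedes o m x y
  xz : Precedes o m x z
  xt : Precedes o m x t
  xα : Precedes o m x α
  yz : Precedes o m y z
  yt : Precedes o m y t
  yα : Precedes o m y α
  zt : Precedes o m z t
  zα : Precedes o m z α
  tα : Precedes o m t α
  injOn_x : Set.InjOn x (Set.Iio m)
  injOn_t : Set.InjOn t (Set.Iio m)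

lemma injOn_of_pairwise_descPts {o : Circle1} {m : ℕ} {f : ℕ → P}
    (h : (descPts (fun i => (f i : Circle1)) m).Pairwise fun a b => coordAt o a < coordAt o b) :
    Set.InjOn f (Set.Iio m) := by
  rw [descPts, List.pairwise_reverse, List.pairwise_map] at h
  have hnodup : ((List.range m).map f).Nodup := by
    rw [List.Nodup, List.pairwise_map]
    exact h.imp fun hlt heq => hlt.ne (by rw [heq])
  intro k hk l hl hkl
  exact List.inj_on_of_nodup_map hnodup (List.mem_range.2 hk) (List.mem_range.2 hl) hkl

theorem AnticlockwiseList.exists_isPentagonCut {m : ℕ} {x y z t α : ℕ → P}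
    (h : AnticlockwiseList
      (descPts (fun i => (x i : Circle1)) m ++ descPts (fun i => (y i : Circle1)) m
        ++ descPts (fun i => (z i : Circle1)) m ++ descPts (fun i => (t i : Circle1)) m
        ++ descPts (fun i => (α i : Circle1)) m)) :
    ∃ o, IsPentagonCut o m x y z t α := by
  obtain ⟨o, -, hchain⟩ := h
  have hpairwise := List.isChain_iff_pairwise.1 hchain
  have precedes {f g : ℕ → P} (hfg : ∀ a ∈ descPts (fun i => (f i : Circle1)) m,
      ∀ b ∈ descPts (fun i => (g i : Circle1)) m, coordAt o a < coordAt o b) :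
      Precedes o m f g := fun k hk l hl =>
    hfg _ (by simpa [descPts] using ⟨k, hk, rfl⟩) _ (by simpa [descPts] using ⟨l, hl, rfl⟩)
  simp only [List.pairwise_map, List.pairwise_append, List.mem_append, or_imp, forall_and]
    at hpairwise
  obtain ⟨⟨⟨⟨hx, -, hxy⟩, -, hxz, hyz⟩, ht, ⟨hxt, hyt⟩, hzt⟩, -, ⟨⟨hxα, hyα⟩, hzα⟩, htα⟩ :=
    hpairwise
  exact ⟨o, precedes hxy, precedes hxz, precedes hxt, precedes hxα, precedes hyz, precedes hyt,
    precedes hyα, precedes hzt, precedes hzα, precedes htα, injOn_of_pairwise_descPts hx,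
    injOn_of_pairwise_descPts ht⟩

end Pentagon

namespace IsPentagonCut

variable {K : Type} [Field K] {P : Set Circle1} {o : Circle1} {m p q r s : ℕ}
  {x y z t α : ℕ → P} {w u : P}

lemma exists_isSwapSign_of_ne_last (hcut : IsPentagonCut o m x y z t α) (hpq : p + q = m)
    (hrs : r + s = m) (hw : w = y 0 ∨ w = t 0) {j : Fin (m + 1)} (hj : j ≠ Fin.last m) :
    ∃ c : K, ∀ u, IsSwapSign o (rows3s x z x p q w) (rows3s x t x r s u) j c := by
  rcases rows3s_of_ne_last (x := x) (z := t) (z' := x) hrs hj with ⟨k, hk, hBj⟩ | ⟨k, hk, hBj⟩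
  · by_cases hkp : k < p
    · refine ⟨0, fun u => isSwapSign_zero_of_mem_range ?_⟩
      rw [hBj, mem_range_rows3s hpq]
      exact .inl ⟨k, hkp, rfl⟩
    · refine ⟨1, fun u => isSwapSign_of_forall_mem_range fun a ha => ?_⟩
      rw [hBj, mem_range_rows3s hrs]
      rcases (mem_range_rows3s hpq).1 ha with ⟨l, hl, rfl⟩ | ⟨l, hl, rfl⟩ | rfl
      · refine .inl ⟨.inl ⟨l, by lia, rfl⟩, fun hlk => ?_⟩
        have := hcut.injOn_x (Set.mem_Iio.2 (by lia)) (Set.mem_Iio.2 (by lia)) hlk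
        lia
      · exact .inr (cutSign_of_gt (hcut.xz k (by lia) l (by lia)))
      · rcases hw with rfl | rfl
        · exact .inr (cutSign_of_gt (hcut.xy k (by lia) 0 (by lia)))
        · exact .inr (cutSign_of_gt (hcut.xt k (by lia) 0 (by lia)))
  · by_cases hwk : w = t k
    · refine ⟨0, fun u => isSwapSign_zero_of_mem_range ?_⟩
      rw [hBj, mem_range_rows3s hpq]
      exact .inr (.inr hwk)
    · refine ⟨-1, fun u => isSwapSign_of_forall_mem_range fun a ha => ?_⟩
      rw [hBj, mem_range_rows3s hrs]
      rcases (mem_range_rows3s hpq).1 ha with ⟨l, hl, rfl⟩ | ⟨l, hl, rfl⟩ | rfl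
      · exact .inr (cutSign_of_lt (hcut.xt l (by lia) k (by lia)))
      · exact .inr (cutSign_of_lt (hcut.zt l (by lia) k (by lia)))
      · rcases hw with rfl | rfl
        · exact .inr (cutSign_of_lt (hcut.yt 0 (by lia) k (by lia)))
        · exact .inl ⟨.inr (.inl ⟨0, by lia, rfl⟩), hwk⟩

lemma isSwapSign_last_α (hcut : IsPentagonCut o m x y z t α) (hm : 0 < m) (hpq : p + q = m)
    (hrs : r + s = m) (hw : w = y 0 ∨ w = t 0) :
    IsSwapSign o (rows3s x z x p q w) (rows3s x t x r s (α 0)) (Fin.last m) (-1 : K) := by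
  refine isSwapSign_of_forall_mem_range fun a ha => .inr ?_
  rw [rows3s_last hrs]
  apply cutSign_of_lt
  rcases (mem_range_rows3s hpq).1 ha with ⟨l, hl, rfl⟩ | ⟨l, hl, rfl⟩ | rfl
  · exact hcut.xα l (by lia) 0 hm
  · exact hcut.zα l (by lia) 0 hm
  · rcases hw with rfl | rfl
    · exact hcut.yα 0 hm 0 hm
    · exact hcut.tα 0 hm 0 hm

lemma isSwapSign_last_z_zero (hpq : p + q = m) (hrs : r + s = m) (hq : 0 < q) :
    IsSwapSign o (rows3s x z x p q w) (rows3s x t x r s (z 0)) (Fin.last m) (0 : K) := by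
  refine isSwapSign_zero_of_mem_range ?_
  rw [rows3s_last hrs, mem_range_rows3s hpq]
  exact .inr (.inl ⟨0, hq, rfl⟩)

lemma isSwapSign_last_z_neg_one (hcut : IsPentagonCut o m x y z t α) (hm : 0 < m)
    (hrs : r + s = m) (hw : w = y 0 ∨ 0 < s ∧ w = t 0) :
    IsSwapSign o (rows3s x z x m 0 w) (rows3s x t x r s (z 0)) (Fin.last m) (-1 : K) := by
  refine isSwapSign_of_forall_mem_range fun a ha => ?_
  rw [rows3s_last hrs, mem_range_rows3s hrs]
  rcases (mem_range_rows3s (add_zero m)).1 ha with ⟨l, hl, rfl⟩ | ⟨l, hl, rfl⟩ | rfl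
  · exact .inr (cutSign_of_lt (hcut.xz l hl 0 hm))
  · exact absurd hl l.not_lt_zero
  · rcases hw with rfl | ⟨hs, rfl⟩
    · exact .inr (cutSign_of_lt (hcut.yz 0 hm 0 hm))
    · refine .inl ⟨.inr (.inl ⟨0, hs, rfl⟩), fun htz => ?_⟩
      exact (hcut.zt 0 hm 0 hm).ne (by rw [htz])

lemma isSwapSign_last_z_one (hcut : IsPentagonCut o m x y z t α) (hm : 0 < m) :
    IsSwapSign o (rows3s x z x m 0 (t 0)) (rows3s x t x m 0 (z 0)) (Fin.last m) (1 : K) := by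
  refine isSwapSign_of_forall_mem_range fun a ha => ?_
  rw [rows3s_last (add_zero m), mem_range_rows3s (add_zero m)]
  rcases (mem_range_rows3s (add_zero m)).1 ha with ⟨l, hl, rfl⟩ | ⟨l, hl, rfl⟩ | rfl
  · refine .inl ⟨.inl ⟨l, hl, rfl⟩, fun hxz => ?_⟩
    exact (hcut.xz l hl 0 hm).ne (by rw [hxz])
  · exact absurd hl l.not_lt_zero
  · exact .inr (cutSign_of_gt (hcut.zt 0 hm 0 hm))

lemma exists_isSwapSign_last (hcut : IsPentagonCut o m x y z t α) (hm : 0 < m)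
    (hpq : p + q = m) (hrs : r + s = m) (hqs : 0 < q ∨ 0 < s) (hu : u = z 0 ∨ u = α 0) :
    ∃ c : K, ∀ w, w = y 0 ∨ w = t 0 →
      IsSwapSign o (rows3s x z x p q w) (rows3s x t x r s u) (Fin.last m) c := by
  rcases hu with rfl | rfl
  · rcases q.eq_zero_or_pos with rfl | hq
    · have hs : 0 < s := hqs.resolve_left (lt_irrefl 0)
      obtain rfl : p = m := hpq
      exact ⟨-1, fun w hw => hcut.isSwapSign_last_z_neg_one hm hrs (hw.imp_right fun h => ⟨hs, h⟩)⟩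
    · exact ⟨0, fun w _ => isSwapSign_last_z_zero hpq hrs hq⟩
  · exact ⟨-1, fun w hw => hcut.isSwapSign_last_α hm hpq hrs hw⟩

variable [CharZero K] {Bq : QnRing K P (m + 1) → QnRing K P (m + 1) → QnRing K P (m + 1)}

theorem bracket_EQuot_eq_zero (hcut : IsPentagonCut o m x y z t α) (hm : 0 < m)
    (hBq : IsQnBracket K P (m + 1) 1 0 Bq) (hpq : p + q = m) (hrs : r + s = m)
    (hqs : 0 < q ∨ 0 < s) {w₁ w₂ u₁ u₂ : P} (hw₁ : w₁ = y 0 ∨ w₁ = t 0)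
    (hw₂ : w₂ = y 0 ∨ w₂ = t 0) (hu₁ : u₁ = z 0 ∨ u₁ = α 0) (hu₂ : u₂ = z 0 ∨ u₂ = α 0)
    {v : Fin (m + 1) → P}
    (hA : toZn K P (m + 1) (Dmat K P (m + 1) (rows3s x z x p q w₂) v) ∈
      nonZeroDivisors (ZnRing K P (m + 1)))
    (hB : toZn K P (m + 1) (Dmat K P (m + 1) (rows3s x t x r s u₂) v) ∈
      nonZeroDivisors (ZnRing K P (m + 1))) :
    Bq (EQuot K P (m + 1) (rows3s x z x p q w₁) (rows3s x z x p q w₂) v hA)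
      (EQuot K P (m + 1) (rows3s x t x r s u₁) (rows3s x t x r s u₂) v hB) = 0 := by
  obtain ⟨c₁, hc₁⟩ := hcut.exists_isSwapSign_last (K := K) hm hpq hrs hqs hu₁
  obtain ⟨c₂, hc₂⟩ := hcut.exists_isSwapSign_last (K := K) hm hpq hrs hqs hu₂
  rw [hBq.EQuot_EQuot
    (fun j hj => (hcut.exists_isSwapSign_of_ne_last hpq hrs hw₁ hj).imp fun c hc => ⟨hc _, hc _⟩)
    (fun j hj => (hcut.exists_isSwapSign_of_ne_last hpq hrs hw₂ hj).imp fun c hc => ⟨hc _, hc _⟩)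
    (hc₁ _ hw₁) (hc₂ _ hw₁) (hc₁ _ hw₂) (hc₂ _ hw₂),
    show c₂ + c₁ - c₁ - c₂ = 0 by ring]
  simp only [mul_zero, map_zero, zero_mul]

theorem bracket_EQuot_eq_mul (hcut : IsPentagonCut o m x y z t α) (hm : 0 < m)
    (hBq : IsQnBracket K P (m + 1) 1 0 Bq) (hpq : p + q = m) (hrs : r + s = m) (hq : q = 0)
    (hs : s = 0) {v : Fin (m + 1) → P}
    (hA : toZn K P (m + 1) (Dmat K P (m + 1) (rows3s x z x p q (y 0)) v) ∈
      nonZeroDivisors (ZnRing K P (m + 1)))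
    (hB : toZn K P (m + 1) (Dmat K P (m + 1) (rows3s x t x r s (z 0)) v) ∈
      nonZeroDivisors (ZnRing K P (m + 1))) :
    Bq (EQuot K P (m + 1) (rows3s x z x p q (t 0)) (rows3s x z x p q (y 0)) v hA)
        (EQuot K P (m + 1) (rows3s x t x r s (α 0)) (rows3s x t x r s (z 0)) v hB) =
      EQuot K P (m + 1) (rows3s x z x p q (t 0)) (rows3s x z x p q (y 0)) v hA *
        EQuot K P (m + 1) (rows3s x t x r s (α 0)) (rows3s x t x r s (z 0)) v hB := by
  subst hq hs
  obtain rfl : m = p := hpq.symm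
  obtain rfl : m = r := hrs.symm
  rw [hBq.EQuot_EQuot
    (fun j hj => (hcut.exists_isSwapSign_of_ne_last hpq hrs (.inr rfl) hj).imp
      fun c hc => ⟨hc _, hc _⟩)
    (fun j hj => (hcut.exists_isSwapSign_of_ne_last hpq hrs (.inl rfl) hj).imp
      fun c hc => ⟨hc _, hc _⟩)
    (hcut.isSwapSign_last_α hm hpq hrs (.inr rfl)) (hcut.isSwapSign_last_z_one hm)
    (hcut.isSwapSign_last_α hm hpq hrs (.inl rfl))
    (hcut.isSwapSign_last_z_neg_one hm hrs (.inl rfl)),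
    show (1 / 2 * (1 + -1 - -1 - -1) : K) = 1 by norm_num]
  simp only [map_one, one_mul]

end IsPentagonCut

/-- In the pentagon configuration
`x_{n-1} ≺ … ≺ x_1 ≺ y_{n-1} ≺ … ≺ y_1 ≺ z_{n-1} ≺ … ≺ z_1 ≺ t_{n-1} ≺ … ≺ t_1 ≺
α_{n-1} ≺ … ≺ α_1` of pairwise distinct points of `P` ordered anticlockwise, let
`A_i = E(x^i, z^{n-i-1} | t_1, y_1) · E(x^{i-1}, z^{n-i} | y_1, t_1)` and
`B_j = E(x^j, t^{n-j-1} | α_1, z_1) · E(x^{j-1}, t^{n-j} | z_1, α_1)`.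
Then the normalized extended swapping bracket `[A_i, B_j]` equals `1` if `i = j = n-1`
and `0` otherwise. -/
theorem bracket_edge_functions_adjacent_edges (K : Type) [Field K] [CharZero K]
    (P : Set Circle1) (n : ℕ) (hn : 2 ≤ n) (x y z t al : ℕ → ↥P)
    (hcfg : AnticlockwiseList
      (descPts (fun i => ((x i : Circle1))) (n-1) ++ descPts (fun i => ((y i : Circle1))) (n-1)
        ++ descPts (fun i => ((z i : Circle1))) (n-1)
        ++ descPts (fun i => ((t i : Circle1))) (n-1)
        ++ descPts (fun i => ((al i : Circle1))) (n-1)))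
    (i j : ℕ) (hi1 : 1 ≤ i) (hi2 : i ≤ n-1) (hj1 : 1 ≤ j) (hj2 : j ≤ n-1) :
    ∀ Bq : QnRing K P n → QnRing K P n → QnRing K P n, IsQnBracket K P n 1 0 Bq →
    ∀ v : Fin n → ↥P, Function.Injective v →
    ∀ (hA1 : toZn K P n (Dmat K P n (rows3s x z x i (n-i-1) (y 0)) v)
          ∈ nonZeroDivisors (ZnRing K P n))
      (hA2 : toZn K P n (Dmat K P n (rows3s x z x (i-1) (n-i) (t 0)) v)
          ∈ nonZeroDivisors (ZnRing K P n))
      (hB1 : toZn K P n (Dmat K P n (rows3s x t x j (n-j-1) (z 0)) v)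
          ∈ nonZeroDivisors (ZnRing K P n))
      (hB2 : toZn K P n (Dmat K P n (rows3s x t x (j-1) (n-j) (al 0)) v)
          ∈ nonZeroDivisors (ZnRing K P n)),
      (i = n-1 ∧ j = n-1 →
        Bq (edgeQuot K P n x z (t 0) (y 0) i v hA1 hA2)
           (edgeQuot K P n x t (al 0) (z 0) j v hB1 hB2)
          = edgeQuot K P n x z (t 0) (y 0) i v hA1 hA2
            * edgeQuot K P n x t (al 0) (z 0) j v hB1 hB2) ∧
      (¬(i = n-1 ∧ j = n-1) →
        Bq (edgeQuot K P n x z (t 0) (y 0) i v hA1 hA2)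
           (edgeQuot K P n x t (al 0) (z 0) j v hB1 hB2) = 0) := by
  intro Bq hBq v _ hA1 hA2 hB1 hB2
  obtain ⟨m, rfl⟩ : ∃ m, n = m + 1 := ⟨n - 1, by lia⟩
  obtain ⟨o, hcut : IsPentagonCut o m x y z t al⟩ := hcfg.exists_isPentagonCut
  have hm : 0 < m := by lia
  have hi : i + (m + 1 - i - 1) = m := by lia
  have hi' : i - 1 + (m + 1 - i) = m := by lia
  have hj : j + (m + 1 - j - 1) = m := by lia
  have hj' : j - 1 + (m + 1 - j) = m := by lia
  simp only [edgeQuot, hBq.2.1, hBq.2.2]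
  rw [hcut.bracket_EQuot_eq_zero hm hBq hi' hj' (by lia) (.inl rfl) (.inr rfl) (.inl rfl)
      (.inr rfl),
    hcut.bracket_EQuot_eq_zero hm hBq hi' hj (by lia) (.inl rfl) (.inr rfl) (.inr rfl) (.inl rfl),
    hcut.bracket_EQuot_eq_zero hm hBq hi hj' (by lia) (.inr rfl) (.inl rfl) (.inl rfl) (.inr rfl)]
  refine ⟨fun h => ?_, fun h => ?_⟩
  · rw [hcut.bracket_EQuot_eq_mul hm hBq hi hj (by lia) (by lia)]
    ring
  · rw [hcut.bracket_EQuot_eq_zero hm hBq hi hj (by lia) (.inr rfl) (.inl rfl) (.inr rfl)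
      (.inl rfl)]
    ring

end
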